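/- Let $X$ be a Hermitian positive semidefinite complex matrix on the tensor product space indexed by $n_1 \times n_2$ satisfying $\mathrm{tr}_2 X = \hat{1}_1$. Then there exists a finite family of complex matrices $(A^{(k)})_k$ indexed by $n_2 \times n_1$ such that $X = \sum_k |A^{(k)}\rangle\rangle\langle\langle A^{(k)}|$ and $\sum_k A^{(k)\dagger} A^{(k)} = \hat{1}_1$; consequently the map $\varrho \mapsto \mathrm{tr}_1\big((\varrho^{\top} \otimes \hat{1}_2) X\big)$ equals the completely positive trace preserving map $\varrho \mapsto \sum_k A^{(k)} \varrho A^{(k)\dagger}$. -/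

import Mathlib

/-!
A spectral decomposition writes the positive semidefinite matrix `X` as a sum of rank-one operators
`|v⟩⟨v|`, and every vector `v` on the tensor product is `|A⟩⟩` for a unique matrix `A`; these `A`
are the Kraus operators. Everything else is linear in `X` and reduces to the rank-one identities
`tr₁ |C⟩⟩⟨⟨D| = C Dᴴ`, `tr₂ |C⟩⟩⟨⟨D| = (Dᴴ C)ᵀ` and `(ρᵀ ⊗ 1) |C⟩⟩ = |C ρ⟩⟩`.
-/

open Matrix Kronecker ComplexOrder

/-- The vectorization `|C⟩⟩` of a matrix `C : Matrix n₂ n₁ ℂ`: the vector indexed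
by pairs `(j, i) ∈ n₁ × n₂` whose `(j, i)` coordinate is `C i j`. -/
def matVec {n₁ n₂ : Type*} (C : Matrix n₂ n₁ ℂ) : n₁ × n₂ → ℂ :=
  fun p => C p.2 p.1

/-- The rank-one operator `|C₁⟩⟩⟨⟨C₂|` on the tensor product space. -/
def outerVec {n₁ n₂ : Type*} (C₁ C₂ : Matrix n₂ n₁ ℂ) :
    Matrix (n₁ × n₂) (n₁ × n₂) ℂ :=
  fun p q => matVec C₁ p * star (matVec C₂ q)

/-- Partial trace over the first tensor factor. -/
noncomputable def ptr1 {n₁ n₂ : Type*} [Fintype n₁]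
    (M : Matrix (n₁ × n₂) (n₁ × n₂) ℂ) : Matrix n₂ n₂ ℂ :=
  fun k l => ∑ i : n₁, M (i, k) (i, l)

/-- Partial trace over the second tensor factor. -/
noncomputable def ptr2 {n₁ n₂ : Type*} [Fintype n₂]
    (M : Matrix (n₁ × n₂) (n₁ × n₂) ℂ) : Matrix n₁ n₁ ℂ :=
  fun j m => ∑ k : n₂, M (j, k) (m, k)

section Kraus

variable {n₁ n₂ : Type*}

theorem outerVec_eq_vecMulVec (C D : Matrix n₂ n₁ ℂ) :
    outerVec C D = vecMulVec (vec C) (star (vec D)) :=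
  rfl

theorem exists_eq_sum_outerVec_of_posSemidef [Finite n₁] [Finite n₂]
    {X : Matrix (n₁ × n₂) (n₁ × n₂) ℂ} (hX : X.PosSemidef) :
    ∃ (m : ℕ) (A : Fin m → Matrix n₂ n₁ ℂ), X = ∑ k, outerVec (A k) (A k) := by
  obtain ⟨m, v, hv⟩ := posSemidef_iff_eq_sum_vecMulVec.mp hX
  choose A hA using fun k => vec_bijective.surjective (v k)
  exact ⟨m, A, by simp only [hv, outerVec_eq_vecMulVec, hA]⟩

theorem kronecker_mul_outerVec [Fintype n₁] [Fintype n₂]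
    (B : Matrix n₁ n₁ ℂ) (A : Matrix n₂ n₂ ℂ) (C D : Matrix n₂ n₁ ℂ) :
    (B ⊗ₖ A) * outerVec C D = outerVec (A * C * Bᵀ) D := by
  rw [outerVec_eq_vecMulVec, mul_vecMulVec, kronecker_mulVec_vec, outerVec_eq_vecMulVec]

theorem ptr1_sum [Fintype n₁] {ι : Type*} (s : Finset ι)
    (M : ι → Matrix (n₁ × n₂) (n₁ × n₂) ℂ) :
    ptr1 (∑ k ∈ s, M k) = ∑ k ∈ s, ptr1 (M k) := by
  ext i j
  simp only [ptr1, Matrix.sum_apply]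
  exact Finset.sum_comm

theorem ptr2_sum [Fintype n₂] {ι : Type*} (s : Finset ι)
    (M : ι → Matrix (n₁ × n₂) (n₁ × n₂) ℂ) :
    ptr2 (∑ k ∈ s, M k) = ∑ k ∈ s, ptr2 (M k) := by
  ext i j
  simp only [ptr2, Matrix.sum_apply]
  exact Finset.sum_comm

theorem ptr1_outerVec [Fintype n₁] (C D : Matrix n₂ n₁ ℂ) :
    ptr1 (outerVec C D) = C * Dᴴ :=
  rfl

theorem ptr2_outerVec [Fintype n₂] (C D : Matrix n₂ n₁ ℂ) :
    ptr2 (outerVec C D) = (Dᴴ * C)ᵀ := by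
  rw [transpose_mul]
  rfl

theorem ptr1_transpose_kronecker_one_mul_outerVec [Fintype n₁] [Fintype n₂] [DecidableEq n₂]
    (ρ : Matrix n₁ n₁ ℂ) (C D : Matrix n₂ n₁ ℂ) :
    ptr1 ((ρᵀ ⊗ₖ (1 : Matrix n₂ n₂ ℂ)) * outerVec C D) = C * ρ * Dᴴ := by
  rw [kronecker_mul_outerVec, Matrix.one_mul, transpose_transpose, ptr1_outerVec]

theorem choi_matrix_gives_kraus_general [Fintype n₁] [Fintype n₂] [DecidableEq n₂]
    (X : Matrix (n₁ × n₂) (n₁ × n₂) ℂ) (hX : X.PosSemidef) :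
    ∃ (ι : Type) (_ : Fintype ι) (A : ι → Matrix n₂ n₁ ℂ),
      X = (∑ k, outerVec (A k) (A k)) ∧
      (∑ k, (A k)ᴴ * A k) = (ptr2 X)ᵀ ∧
      ∀ ρ : Matrix n₁ n₁ ℂ,
        ptr1 ((ρᵀ ⊗ₖ (1 : Matrix n₂ n₂ ℂ)) * X) = ∑ k, A k * ρ * (A k)ᴴ := by
  obtain ⟨m, A, rfl⟩ := exists_eq_sum_outerVec_of_posSemidef hX
  refine ⟨Fin m, inferInstance, A, rfl, ?_, fun ρ => ?_⟩
  · simp only [ptr2_sum, ptr2_outerVec, transpose_sum, transpose_transpose]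
  · simp only [Matrix.mul_sum, ptr1_sum, ptr1_transpose_kronecker_one_mul_outerVec]

end Kraus

/-- A Hermitian positive semidefinite matrix `X` on the
tensor product space with `tr₂ X = 1` is the Choi matrix of a CPTP map:
there are Kraus operators `A k` with `X = ∑ k, |A k⟩⟩⟨⟨A k|`,
`∑ k, (A k)ᴴ * A k = 1`, and the induced map `ρ ↦ tr₁ ((ρᵀ ⊗ 1) * X)`
coincides with `ρ ↦ ∑ k, A k * ρ * (A k)ᴴ`. -/
theorem choi_matrix_gives_kraus
    {n₁ n₂ : Type*} [Fintype n₁] [Fintype n₂] [DecidableEq n₁] [DecidableEq n₂]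
    (X : Matrix (n₁ × n₂) (n₁ × n₂) ℂ) (hX : X.PosSemidef)
    (hTP : ptr2 X = (1 : Matrix n₁ n₁ ℂ)) :
    ∃ (ι : Type) (_ : Fintype ι) (A : ι → Matrix n₂ n₁ ℂ),
      X = (∑ k, outerVec (A k) (A k)) ∧
      (∑ k, (A k)ᴴ * A k) = (1 : Matrix n₁ n₁ ℂ) ∧
      ∀ ρ : Matrix n₁ n₁ ℂ,
        ptr1 ((ρᵀ ⊗ₖ (1 : Matrix n₂ n₂ ℂ)) * X) = ∑ k, A k * ρ * (A k)ᴴ := by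
  simpa only [hTP, transpose_one] using choi_matrix_gives_kraus_general X hX
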